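/- arXiv:2006.15671 — 2 statements merged into one kernel-verified Lean document; each statement's English description precedes it below -/
import Mathlib

section
/- Let g be a Schwartz function on ℝ. For τ, λ ∈ ℝ define K(τ,λ) := ∫_ℝ g(μ−λ)·(g(τ−μ) − g(τ))/μ dμ (the integral converges absolutely). Then: (i) for every real α ≥ 2 there exists C_α > 0 such that |K(τ,λ)| ≤ C_α·(⟨τ−λ⟩^{−α} + ⟨τ⟩^{−α})·⟨λ⟩^{−1} for all τ, λ ∈ ℝ; and (ii) there exists C > 0 such that |K(τ,λ)| ≤ C·⟨τ⟩^{−1}·⟨τ−λ⟩^{−1} for all τ, λ ∈ ℝ. -/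
open MeasureTheory

/-!
The difference quotient `(g(τ-μ) - g(τ))/μ` is controlled by the mean value theorem for `|μ| ≤ 1`
and by the decay of `g` for `|μ| ≥ 1`; both give the majorant `(⟨τ-μ⟩^{-α} + ⟨τ⟩^{-α})⟨μ⟩^{-1}`.
By Peetre's inequality, replacing `μ` by `λ` in this majorant costs only a power of `⟨μ-λ⟩`, which
the rapid decay of `g(μ-λ)` absorbs, leaving an integrable factor `⟨μ-λ⟩^{-2}`. The second estimate
follows from the case `α = 2` of the first, again by Peetre's inequality.
-/

open scoped SchwartzMap

lemma rpow_le_rpow_abs_mul_rpow {a b p : ℝ} (ha : 0 < a) (hb : 0 < b) (hp : 0 < p)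
    (hab : a ≤ p * b) (hba : b ≤ p * a) (s : ℝ) : a ^ s ≤ p ^ |s| * b ^ s := by
  rcases le_total 0 s with hs | hs
  · calc a ^ s ≤ (p * b) ^ s := Real.rpow_le_rpow ha.le hab hs
      _ = p ^ |s| * b ^ s := by rw [Real.mul_rpow hp.le hb.le, abs_of_nonneg hs]
  · have h_inv : p⁻¹ * b ≤ a := by rwa [inv_mul_le_iff₀ hp]
    calc a ^ s ≤ (p⁻¹ * b) ^ s := Real.rpow_le_rpow_of_nonpos (by positivity) h_inv hs
      _ = p ^ |s| * b ^ s := by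
        rw [Real.mul_rpow (by positivity) hb.le, abs_of_nonpos hs, Real.inv_rpow hp.le,
          Real.rpow_neg hp.le]

section JapaneseBracket

variable {V F : Type*}

/-- The Japanese bracket `⟨x⟩ = (1 + ‖x‖²)^{1/2}`, the weight in which all decay is measured. -/
noncomputable def japaneseBracket [Norm V] (x : V) : ℝ := √(1 + ‖x‖ ^ 2)

local notation "⟪" x "⟫" => japaneseBracket x

lemma one_le_japaneseBracket [Norm V] (x : V) : 1 ≤ ⟪x⟫ :=
  Real.one_le_sqrt.mpr (le_add_of_nonneg_right (sq_nonneg _))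

lemma japaneseBracket_pos [Norm V] (x : V) : 0 < ⟪x⟫ :=
  one_pos.trans_le (one_le_japaneseBracket x)

lemma japaneseBracket_real (x : ℝ) : ⟪x⟫ = √(1 + x ^ 2) := by
  rw [japaneseBracket, Real.norm_eq_abs, sq_abs]

lemma japaneseBracket_real_rpow_neg (x α : ℝ) : ⟪x⟫ ^ (-α) = (1 + x ^ 2) ^ (-(α / 2)) := by
  rw [japaneseBracket_real, ← Real.rpow_div_two_eq_sqrt _ (by positivity), neg_div]

lemma japaneseBracket_real_rpow_neg_two (x : ℝ) : ⟪x⟫ ^ (-2 : ℝ) = (1 + x ^ 2)⁻¹ := by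
  rw [japaneseBracket_real_rpow_neg, div_self two_ne_zero, Real.rpow_neg_one]

section Seminormed

variable [SeminormedAddCommGroup V]

lemma japaneseBracket_neg (x : V) : ⟪-x⟫ = ⟪x⟫ := by
  rw [japaneseBracket, norm_neg, japaneseBracket]

lemma japaneseBracket_le_sqrt_two_mul_max (x : V) : ⟪x⟫ ≤ √2 * max 1 ‖x‖ := by
  refine Real.sqrt_le_iff.mpr ⟨by positivity, ?_⟩
  have h_one : (1 : ℝ) ^ 2 ≤ max 1 ‖x‖ ^ 2 := by gcongr; exact le_max_left _ _
  have h_norm : ‖x‖ ^ 2 ≤ max 1 ‖x‖ ^ 2 := by gcongr; exact le_max_right _ _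
  rw [mul_pow, Real.sq_sqrt zero_le_two]
  linarith

lemma sqrt_two_mul_japaneseBracket_le_two {x : V} (hx : ‖x‖ ≤ 1) : √2 * ⟪x⟫ ≤ 2 := by
  have h := japaneseBracket_le_sqrt_two_mul_max x
  rw [max_eq_left hx, mul_one] at h
  calc √2 * ⟪x⟫ ≤ √2 * √2 := by gcongr
    _ = 2 := Real.mul_self_sqrt zero_le_two

lemma japaneseBracket_add_le (x y : V) : ⟪x + y⟫ ≤ √2 * ⟪x⟫ * ⟪y⟫ := by
  simp only [japaneseBracket]
  rw [← Real.sqrt_mul zero_le_two, ← Real.sqrt_mul (by positivity)]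
  refine Real.sqrt_le_sqrt ?_
  have h_add : ‖x + y‖ ^ 2 ≤ (‖x‖ + ‖y‖) ^ 2 := by gcongr; exact norm_add_le x y
  nlinarith [sq_nonneg (‖x‖ - ‖y‖), sq_nonneg (‖x‖ * ‖y‖)]

lemma japaneseBracket_le_mul_sub (x y : V) : ⟪x⟫ ≤ √2 * ⟪x - y⟫ * ⟪y⟫ := by
  simpa only [sub_add_cancel] using japaneseBracket_add_le (x - y) y

theorem peetre_inequality (s : ℝ) (x y : V) : ⟪x⟫ ^ s ≤ (√2 * ⟪x - y⟫) ^ |s| * ⟪y⟫ ^ s := by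
  have h_pos := japaneseBracket_pos (x - y)
  refine rpow_le_rpow_abs_mul_rpow (japaneseBracket_pos x) (japaneseBracket_pos y) (by positivity)
    (japaneseBracket_le_mul_sub x y) ?_ s
  simpa only [← neg_sub y x, japaneseBracket_neg] using japaneseBracket_le_mul_sub y x

lemma inv_japaneseBracket_le (x y : V) : ⟪x⟫⁻¹ ≤ √2 * ⟪x - y⟫ * ⟪y⟫⁻¹ := by
  simpa only [Real.rpow_neg_one, abs_neg, abs_one, Real.rpow_one]
    using peetre_inequality (-1) x y

lemma japaneseBracket_rpow_neg_two_mul_inv_sub_le (x y : V) :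
    ⟪x⟫ ^ (-2 : ℝ) * ⟪x - y⟫⁻¹ ≤ √2 * (⟪x⟫⁻¹ * ⟪y⟫⁻¹) := by
  have hx := japaneseBracket_pos x
  have h_peetre : ⟪x - y⟫⁻¹ ≤ √2 * ⟪x⟫ * ⟪y⟫⁻¹ := by
    simpa only [sub_neg_eq_add, sub_add_cancel, japaneseBracket_neg]
      using inv_japaneseBracket_le (x - y) (-y)
  calc ⟪x⟫ ^ (-2 : ℝ) * ⟪x - y⟫⁻¹ ≤ ⟪x⟫ ^ (-2 : ℝ) * (√2 * ⟪x⟫ * ⟪y⟫⁻¹) := by gcongr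
    _ = √2 * (⟪x⟫⁻¹ * ⟪y⟫⁻¹) := by
      rw [Real.rpow_neg hx.le, Real.rpow_two]
      field_simp

end Seminormed

section Decay

variable [NormedAddCommGroup V] [NormedSpace ℝ V] [NormedAddCommGroup F] [NormedSpace ℝ F]

lemma exists_norm_le_mul_japaneseBracket_rpow (f : 𝓢(V, F)) (s : ℝ) :
    ∃ C > 0, ∀ x, ‖f x‖ ≤ C * ⟪x⟫ ^ s := by
  obtain ⟨n, hn⟩ := exists_nat_ge (-s)
  set D := 2 ^ n * ((Finset.Iic (n, 0)).sup fun m => SchwartzMap.seminorm ℝ m.1 m.2) f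
  refine ⟨D + 1, by positivity, fun x => ?_⟩
  have hx := japaneseBracket_pos x
  have h_seminorm : (1 + ‖x‖) ^ n * ‖f x‖ ≤ D := by
    simpa only [norm_iteratedFDeriv_zero] using
      SchwartzMap.one_add_le_sup_seminorm_apply (𝕜 := ℝ) (m := (n, 0)) le_rfl le_rfl f x
  have h_weight : ⟪x⟫ ^ (-s) ≤ (1 + ‖x‖) ^ n :=
    calc ⟪x⟫ ^ (-s) ≤ ⟪x⟫ ^ (n : ℝ) :=
          Real.rpow_le_rpow_of_exponent_le (one_le_japaneseBracket x) hn
      _ = ⟪x⟫ ^ n := Real.rpow_natCast _ _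
      _ ≤ (1 + ‖x‖) ^ n := by gcongr; exact sqrt_one_add_norm_sq_le x
  rw [← div_le_iff₀ (by positivity), div_eq_mul_inv, ← Real.rpow_neg hx.le, mul_comm]
  calc ⟪x⟫ ^ (-s) * ‖f x‖ ≤ (1 + ‖x‖) ^ n * ‖f x‖ := by gcongr
    _ ≤ D + 1 := h_seminorm.trans (by linarith)

variable {g : V → F} {s C₀ C₁ : ℝ}

lemma norm_sub_le_of_norm_fderiv_le_japaneseBracket_rpow (hg : Differentiable ℝ g)
    (h₁ : ∀ x, ‖fderiv ℝ g x‖ ≤ C₁ * ⟪x⟫ ^ s) {x y : V} (hxy : ‖x - y‖ ≤ 1) :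
    ‖g x - g y‖ ≤ 2 ^ |s| * C₁ * ⟪y⟫ ^ s * ‖x - y‖ := by
  have hC₁ : 0 ≤ C₁ := nonneg_of_mul_nonneg_left ((norm_nonneg _).trans (h₁ y))
    (Real.rpow_pos_of_pos (japaneseBracket_pos y) s)
  have hy := japaneseBracket_pos y
  refine (convex_closedBall y 1).norm_image_sub_le_of_norm_fderiv_le (𝕜 := ℝ)
    (fun z _ => hg z) (fun z hz => ?_) (Metric.mem_closedBall_self zero_le_one)
    (mem_closedBall_iff_norm.mpr hxy)
  have hzy := japaneseBracket_pos (z - y)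
  calc ‖fderiv ℝ g z‖ ≤ C₁ * ⟪z⟫ ^ s := h₁ z
    _ ≤ C₁ * ((√2 * ⟪z - y⟫) ^ |s| * ⟪y⟫ ^ s) := by gcongr; exact peetre_inequality s z y
    _ ≤ C₁ * (2 ^ |s| * ⟪y⟫ ^ s) := by
      gcongr
      exact sqrt_two_mul_japaneseBracket_le_two (mem_closedBall_iff_norm.mp hz)
    _ = 2 ^ |s| * C₁ * ⟪y⟫ ^ s := by ring

lemma norm_sub_le_mul_min_one_norm_sub (hg : Differentiable ℝ g)
    (h₀ : ∀ x, ‖g x‖ ≤ C₀ * ⟪x⟫ ^ s) (h₁ : ∀ x, ‖fderiv ℝ g x‖ ≤ C₁ * ⟪x⟫ ^ s) (x y : V) :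
    ‖g x - g y‖ ≤ (C₀ + 2 ^ |s| * C₁) * (⟪x⟫ ^ s + ⟪y⟫ ^ s) * min 1 ‖x - y‖ := by
  have hx : 0 < ⟪x⟫ ^ s := Real.rpow_pos_of_pos (japaneseBracket_pos x) s
  have hy : 0 < ⟪y⟫ ^ s := Real.rpow_pos_of_pos (japaneseBracket_pos y) s
  have hC₀ : 0 ≤ C₀ := nonneg_of_mul_nonneg_left ((norm_nonneg _).trans (h₀ y)) hy
  have hC₁ : 0 ≤ C₁ := nonneg_of_mul_nonneg_left ((norm_nonneg _).trans (h₁ y)) hy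
  rcases le_total ‖x - y‖ 1 with hxy | hxy
  · rw [min_eq_right hxy]
    calc ‖g x - g y‖ ≤ 2 ^ |s| * C₁ * ⟪y⟫ ^ s * ‖x - y‖ :=
          norm_sub_le_of_norm_fderiv_le_japaneseBracket_rpow hg h₁ hxy
      _ ≤ (C₀ + 2 ^ |s| * C₁) * (⟪x⟫ ^ s + ⟪y⟫ ^ s) * ‖x - y‖ := by
        gcongr
        · exact le_add_of_nonneg_left hC₀
        · exact le_add_of_nonneg_left hx.le
  · rw [min_eq_left hxy, mul_one]
    calc ‖g x - g y‖ ≤ C₀ * ⟪x⟫ ^ s + C₀ * ⟪y⟫ ^ s :=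
          (norm_sub_le _ _).trans (add_le_add (h₀ x) (h₀ y))
      _ = C₀ * (⟪x⟫ ^ s + ⟪y⟫ ^ s) := by ring
      _ ≤ (C₀ + 2 ^ |s| * C₁) * (⟪x⟫ ^ s + ⟪y⟫ ^ s) := by
        gcongr
        exact le_add_of_nonneg_right (by positivity)

end Decay

end JapaneseBracket

section DuhamelKernel

local notation "⟪" x "⟫" => japaneseBracket x

/-- The majorant `(⟨τ-λ⟩^{-α} + ⟨τ⟩^{-α})⟨λ⟩^{-1}` of the Duhamel kernel; with `μ` in place of `λ`
it also bounds the difference quotient `(g(τ-μ) - g(τ))/μ`. -/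
noncomputable def duhamelWeight (α τ lam : ℝ) : ℝ :=
  (⟪τ - lam⟫ ^ (-α) + ⟪τ⟫ ^ (-α)) * ⟪lam⟫⁻¹

lemma duhamelWeight_le (α τ μ lam : ℝ) :
    duhamelWeight α τ μ ≤ (√2 * ⟪μ - lam⟫) ^ (|α| + 1) * duhamelWeight α τ lam := by
  have h_base : 1 ≤ √2 * ⟪μ - lam⟫ :=
    one_le_mul_of_one_le_of_one_le (Real.one_le_sqrt.mpr one_le_two) (one_le_japaneseBracket _)
  have h_sub : ⟪τ - μ⟫ ^ (-α) ≤ (√2 * ⟪μ - lam⟫) ^ |α| * ⟪τ - lam⟫ ^ (-α) := by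
    have h := peetre_inequality (-α) (τ - μ) (τ - lam)
    rwa [sub_sub_sub_cancel_left, ← neg_sub μ lam, japaneseBracket_neg, abs_neg] at h
  have hτ := japaneseBracket_pos τ
  have hμ := japaneseBracket_pos μ
  have hτlam := japaneseBracket_pos (τ - lam)
  have h_const : ⟪τ⟫ ^ (-α) ≤ (√2 * ⟪μ - lam⟫) ^ |α| * ⟪τ⟫ ^ (-α) :=
    le_mul_of_one_le_left (by positivity) (Real.one_le_rpow h_base (abs_nonneg α))
  set P := √2 * ⟪μ - lam⟫
  calc duhamelWeight α τ μ
      ≤ (P ^ |α| * ⟪τ - lam⟫ ^ (-α) + P ^ |α| * ⟪τ⟫ ^ (-α)) * (P * ⟪lam⟫⁻¹) := by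
        unfold duhamelWeight
        gcongr
        exact inv_japaneseBracket_le μ lam
    _ = P ^ (|α| + 1) * duhamelWeight α τ lam := by
        rw [duhamelWeight, Real.rpow_add_one (by positivity)]
        ring

lemma duhamelWeight_two_le (τ lam : ℝ) :
    duhamelWeight 2 τ lam ≤ 2 * √2 * (⟪τ⟫⁻¹ * ⟪τ - lam⟫⁻¹) := by
  have h_sub := japaneseBracket_rpow_neg_two_mul_inv_sub_le (τ - lam) τ
  have h_self := japaneseBracket_rpow_neg_two_mul_inv_sub_le τ (τ - lam)
  rw [sub_sub_cancel_left, japaneseBracket_neg] at h_sub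
  rw [sub_sub_cancel] at h_self
  rw [duhamelWeight]
  linarith

lemma inv_abs_mul_min_one_abs_le (μ : ℝ) : |μ|⁻¹ * min 1 |μ| ≤ √2 * ⟪μ⟫⁻¹ := by
  have hμ := japaneseBracket_pos μ
  have h_min : |μ|⁻¹ * min 1 |μ| ≤ (max 1 |μ|)⁻¹ := by
    rw [inv_eq_one_div (max 1 |μ|), le_div_iff₀ (by positivity), mul_assoc, min_mul_max, one_mul]
    exact inv_mul_le_one
  calc |μ|⁻¹ * min 1 |μ| ≤ (max 1 |μ|)⁻¹ := h_min
    _ ≤ √2 * ⟪μ⟫⁻¹ := by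
      rw [← div_eq_mul_inv, inv_le_comm₀ (by positivity) (by positivity), inv_div,
        div_le_iff₀' (by positivity)]
      exact japaneseBracket_le_sqrt_two_mul_max μ

lemma norm_inv_smul_sub_le_duhamelWeight {F : Type*} [NormedAddCommGroup F] [NormedSpace ℝ F]
    {g : ℝ → F} {α C₀ C₁ : ℝ} (hg : Differentiable ℝ g) (h₀ : ∀ x, ‖g x‖ ≤ C₀ * ⟪x⟫ ^ (-α))
    (h₁ : ∀ x, ‖fderiv ℝ g x‖ ≤ C₁ * ⟪x⟫ ^ (-α)) (τ μ : ℝ) :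
    ‖μ⁻¹ • (g (τ - μ) - g τ)‖ ≤ √2 * (C₀ + 2 ^ |α| * C₁) * duhamelWeight α τ μ := by
  have h_diff := norm_sub_le_mul_min_one_norm_sub hg h₀ h₁ (τ - μ) τ
  rw [sub_sub_cancel_left, norm_neg, Real.norm_eq_abs, abs_neg] at h_diff
  have h_factor : 0 ≤ (C₀ + 2 ^ |α| * C₁) * (⟪τ - μ⟫ ^ (-α) + ⟪τ⟫ ^ (-α)) := by
    have hτ := japaneseBracket_pos τ
    have hτμ := japaneseBracket_pos (τ - μ)
    have hC₀ : 0 ≤ C₀ :=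
      nonneg_of_mul_nonneg_left ((norm_nonneg _).trans (h₀ τ)) (by positivity)
    have hC₁ : 0 ≤ C₁ :=
      nonneg_of_mul_nonneg_left ((norm_nonneg _).trans (h₁ τ)) (by positivity)
    positivity
  rw [norm_smul, norm_inv, Real.norm_eq_abs]
  calc |μ|⁻¹ * ‖g (τ - μ) - g τ‖
      ≤ |μ|⁻¹ * ((C₀ + 2 ^ |α| * C₁) * (⟪τ - μ⟫ ^ (-α) + ⟪τ⟫ ^ (-α)) * min 1 |μ|) := by gcongr
    _ = (C₀ + 2 ^ |α| * C₁) * (⟪τ - μ⟫ ^ (-α) + ⟪τ⟫ ^ (-α)) * (|μ|⁻¹ * min 1 |μ|) := by ring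
    _ ≤ (C₀ + 2 ^ |α| * C₁) * (⟪τ - μ⟫ ^ (-α) + ⟪τ⟫ ^ (-α)) * (√2 * ⟪μ⟫⁻¹) :=
        mul_le_mul_of_nonneg_left (inv_abs_mul_min_one_abs_le μ) h_factor
    _ = √2 * (C₀ + 2 ^ |α| * C₁) * duhamelWeight α τ μ := by rw [duhamelWeight]; ring

lemma exists_norm_inv_smul_sub_le_duhamelWeight {F : Type*} [NormedAddCommGroup F]
    [NormedSpace ℝ F] (g : 𝓢(ℝ, F)) (α : ℝ) :
    ∃ C > 0, ∀ τ μ : ℝ, ‖μ⁻¹ • (g (τ - μ) - g τ)‖ ≤ C * duhamelWeight α τ μ := by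
  obtain ⟨C₀, hC₀, h₀⟩ := exists_norm_le_mul_japaneseBracket_rpow g (-α)
  obtain ⟨C₁, hC₁, h₁⟩ :=
    exists_norm_le_mul_japaneseBracket_rpow (SchwartzMap.fderivCLM ℝ ℝ F g) (-α)
  exact ⟨√2 * (C₀ + 2 ^ |α| * C₁), by positivity,
    norm_inv_smul_sub_le_duhamelWeight g.differentiable h₀ h₁⟩

variable {A : Type*} [NonUnitalNormedRing A] [NormedSpace ℝ A]

/-- The integrand `μ ↦ f(μ-λ)(g(τ-μ) - g(τ))/μ` of the Duhamel kernel, for functions with values in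
a real normed ring. Division by `μ` is scalar multiplication by `μ⁻¹`, so it is `0` at `μ = 0`. -/
noncomputable def duhamelIntegrand (f g : ℝ → A) (τ lam μ : ℝ) : A :=
  f (μ - lam) * μ⁻¹ • (g (τ - μ) - g τ)

lemma aestronglyMeasurable_duhamelIntegrand {f g : ℝ → A} (hf : Continuous f) (hg : Continuous g)
    (τ lam : ℝ) : AEStronglyMeasurable (duhamelIntegrand f g τ lam) := by
  have h_left : Continuous fun μ => f (μ - lam) := by fun_prop
  have h_diff : Continuous fun μ => g (τ - μ) - g τ := by fun_prop
  exact h_left.aestronglyMeasurable.mul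
    (measurable_inv.aestronglyMeasurable.smul h_diff.aestronglyMeasurable)

lemma norm_duhamelIntegrand_le {f g : ℝ → A} {α M N : ℝ} (hN : 0 ≤ N)
    (hf : ∀ x, ‖f x‖ ≤ M * ⟪x⟫ ^ (-(|α| + 3)))
    (hg : ∀ τ μ : ℝ, ‖μ⁻¹ • (g (τ - μ) - g τ)‖ ≤ N * duhamelWeight α τ μ) (τ lam μ : ℝ) :
    ‖duhamelIntegrand f g τ lam μ‖ ≤
      M * N * √2 ^ (|α| + 1) * duhamelWeight α τ lam * (1 + (μ - lam) ^ 2)⁻¹ := by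
  have hp := japaneseBracket_pos (μ - lam)
  have h_exponent : ⟪μ - lam⟫ ^ (-(|α| + 3)) * ⟪μ - lam⟫ ^ (|α| + 1) = (1 + (μ - lam) ^ 2)⁻¹ := by
    rw [← Real.rpow_add hp, ← japaneseBracket_real_rpow_neg_two]
    congr 1
    ring
  calc ‖duhamelIntegrand f g τ lam μ‖
      ≤ ‖f (μ - lam)‖ * ‖μ⁻¹ • (g (τ - μ) - g τ)‖ := norm_mul_le _ _
    _ ≤ (M * ⟪μ - lam⟫ ^ (-(|α| + 3))) *
          (N * ((√2 * ⟪μ - lam⟫) ^ (|α| + 1) * duhamelWeight α τ lam)) := by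
        refine mul_le_mul (hf _) ((hg τ μ).trans ?_) (norm_nonneg _) ((norm_nonneg _).trans (hf _))
        gcongr
        exact duhamelWeight_le α τ μ lam
    _ = M * N * √2 ^ (|α| + 1) * duhamelWeight α τ lam * (1 + (μ - lam) ^ 2)⁻¹ := by
        rw [Real.mul_rpow (by positivity) hp.le, ← h_exponent]
        ring

lemma exists_norm_duhamelIntegrand_le (f g : 𝓢(ℝ, A)) (α : ℝ) :
    ∃ C > 0, ∀ τ lam μ : ℝ, ‖duhamelIntegrand f g τ lam μ‖ ≤
      C * duhamelWeight α τ lam * (1 + (μ - lam) ^ 2)⁻¹ := by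
  obtain ⟨M, hM, hf⟩ := exists_norm_le_mul_japaneseBracket_rpow f (-(|α| + 3))
  obtain ⟨N, hN, hg⟩ := exists_norm_inv_smul_sub_le_duhamelWeight g α
  exact ⟨M * N * √2 ^ (|α| + 1), by positivity, norm_duhamelIntegrand_le hN.le hf hg⟩

lemma integrable_duhamelIntegrand (f g : 𝓢(ℝ, A)) (τ lam : ℝ) :
    Integrable (duhamelIntegrand f g τ lam) := by
  obtain ⟨C, -, hC⟩ := exists_norm_duhamelIntegrand_le f g 0
  exact ((integrable_inv_one_add_sq.comp_sub_right lam).const_mul _).mono'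
    (aestronglyMeasurable_duhamelIntegrand f.continuous g.continuous τ lam)
    (.of_forall (hC τ lam))

lemma exists_integral_norm_duhamelIntegrand_le (f g : 𝓢(ℝ, A)) (α : ℝ) :
    ∃ C > 0, ∀ τ lam : ℝ,
      ∫ μ, ‖duhamelIntegrand f g τ lam μ‖ ≤ C * duhamelWeight α τ lam := by
  obtain ⟨C, hC, h_le⟩ := exists_norm_duhamelIntegrand_le f g α
  refine ⟨C * Real.pi, by positivity, fun τ lam => ?_⟩
  calc ∫ μ, ‖duhamelIntegrand f g τ lam μ‖
      ≤ ∫ μ, C * duhamelWeight α τ lam * (1 + (μ - lam) ^ 2)⁻¹ :=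
        integral_mono (integrable_duhamelIntegrand f g τ lam).norm
          ((integrable_inv_one_add_sq.comp_sub_right lam).const_mul _) (h_le τ lam)
    _ = C * duhamelWeight α τ lam * Real.pi := by
        rw [integral_const_mul, integral_sub_right_eq_self (fun x : ℝ => (1 + x ^ 2)⁻¹),
          integral_univ_inv_one_add_sq]
    _ = C * Real.pi * duhamelWeight α τ lam := by ring

theorem duhamel_kernel_estimate_general (f g : 𝓢(ℝ, A)) :
    (∀ τ lam : ℝ, Integrable (duhamelIntegrand f g τ lam)) ∧
    (∀ α : ℝ, ∃ C > 0, ∀ τ lam : ℝ,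
      ∫ μ, ‖duhamelIntegrand f g τ lam μ‖ ≤
        C * ((⟪τ - lam⟫ ^ (-α) + ⟪τ⟫ ^ (-α)) * ⟪lam⟫⁻¹)) ∧
    (∃ C > 0, ∀ τ lam : ℝ,
      ∫ μ, ‖duhamelIntegrand f g τ lam μ‖ ≤ C * ⟪τ⟫⁻¹ * ⟪τ - lam⟫⁻¹) := by
  refine ⟨integrable_duhamelIntegrand f g, exists_integral_norm_duhamelIntegrand_le f g, ?_⟩
  obtain ⟨C, hC, h_le⟩ := exists_integral_norm_duhamelIntegrand_le f g 2
  refine ⟨C * (2 * √2), by positivity, fun τ lam => ?_⟩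
  calc ∫ μ, ‖duhamelIntegrand f g τ lam μ‖ ≤ C * duhamelWeight 2 τ lam := h_le τ lam
    _ ≤ C * (2 * √2 * (⟪τ⟫⁻¹ * ⟪τ - lam⟫⁻¹)) := by gcongr; exact duhamelWeight_two_le τ lam
    _ = C * (2 * √2) * ⟪τ⟫⁻¹ * ⟪τ - lam⟫⁻¹ := by ring

lemma norm_integral_le_integral_norm_duhamelIntegrand (g : ℝ → ℂ) (τ lam : ℝ) :
    ‖∫ μ : ℝ, g (μ - lam) * (g (τ - μ) - g τ) / (μ : ℂ)‖ ≤
      ∫ μ, ‖duhamelIntegrand g g τ lam μ‖ := by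
  have h_eq (μ : ℝ) :
      g (μ - lam) * (g (τ - μ) - g τ) / (μ : ℂ) = duhamelIntegrand g g τ lam μ := by
    rw [duhamelIntegrand, Complex.real_smul, Complex.ofReal_inv]
    ring
  simpa only [h_eq] using norm_integral_le_integral_norm (duhamelIntegrand g g τ lam)

end DuhamelKernel

/-- Proposition 3.1: the kernel `K(τ,λ) = ∫ g(μ−λ)(g(τ−μ)−g(τ))/μ dμ` of the truncated Duhamel
operator satisfies `|K(τ,λ)| ≲_α (⟨τ−λ⟩^{−α} + ⟨τ⟩^{−α})⟨λ⟩^{−1}` for every `α ≥ 2`, and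
`|K(τ,λ)| ≲ ⟨τ⟩^{−1}⟨τ−λ⟩^{−1}`. -/
theorem duhamel_kernel_estimate (g : SchwartzMap ℝ ℂ) :
    (∀ α : ℝ, 2 ≤ α → ∃ C > 0, ∀ τ lam : ℝ,
      ‖∫ μ : ℝ, g (μ - lam) * (g (τ - μ) - g τ) / (μ : ℂ)‖ ≤
        C * (((1 + (τ - lam) ^ 2) ^ (-(α / 2)) + (1 + τ ^ 2) ^ (-(α / 2))) *
          (Real.sqrt (1 + lam ^ 2))⁻¹)) ∧
    (∃ C > 0, ∀ τ lam : ℝ,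
      ‖∫ μ : ℝ, g (μ - lam) * (g (τ - μ) - g τ) / (μ : ℂ)‖ ≤
        C * (Real.sqrt (1 + τ ^ 2))⁻¹ * (Real.sqrt (1 + (τ - lam) ^ 2))⁻¹) := by
  obtain ⟨-, h_weight, h_product⟩ := duhamel_kernel_estimate_general g g
  simp only [← japaneseBracket_real_rpow_neg, ← japaneseBracket_real]
  have h_norm := norm_integral_le_integral_norm_duhamelIntegrand g
  refine ⟨fun α _ => (h_weight α).imp fun _ => ?_, h_product.imp fun _ => ?_⟩
  all_goals exact .imp_right fun h τ lam => (h_norm τ lam).trans (h τ lam)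
end

section
/- For every ε with 0 < ε < 1 there exists a constant C > 0 such that for every integer n, every nonzero integer μ with |n| ≥ |μ|^ε, and all reals N₂, N₃ ≥ 1, the number of pairs (n₂, n₃) ∈ ℤ² satisfying 3·(n−n₂)·(n−n₃)·(n₂+n₃) = μ, |n₂| ≤ N₂ and |n₃| ≤ N₃ is at most C·(N₂·N₃)^ε. -/
/-!
If `k` distinct divisors of `μ` lie within `N` of `x`, their product divides `μ` times the product
of their pairwise differences, which is at most `|μ| (2N)^(k² - k)`. When `|x|` exceeds a large
power of `N`, the product of the divisors is about `|x|^k`, so `|μ| ≤ |x|^m` forces `k ≤ m`.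
Otherwise `|μ|` is itself at most a power of `N`, and the divisor bound `τ(μ) ≲ |μ|^δ` with small
`δ` suffices. Both `n - n₂` and `n - n₃` are such divisors, with `x = n`.
-/

open Finset

section DivisorBound

lemma exists_forall_natCast_add_one_le_mul_pow {𝕜 : Type*} [Field 𝕜] [LinearOrder 𝕜]
    [IsStrictOrderedRing 𝕜] {b : 𝕜} (hb : 1 < b) :
    ∃ K : 𝕜, 1 ≤ K ∧ ∀ a : ℕ, (a + 1 : 𝕜) ≤ K * b ^ a := by
  refine ⟨max 1 (b - 1)⁻¹, le_max_left _ _, fun a ↦ ?_⟩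
  set K := max 1 (b - 1)⁻¹
  have one_le_K : 1 ≤ K := le_max_left _ _
  have one_le_K_mul : 1 ≤ K * (b - 1) :=
    (inv_le_iff_one_le_mul₀ (sub_pos.2 hb)).1 (le_max_right _ _)
  have bernoulli : 1 + a * (b - 1) ≤ b ^ a := one_add_mul_sub_le_pow (by linarith) a
  calc (a + 1 : 𝕜) ≤ a * (K * (b - 1)) + K :=
        add_le_add (le_mul_of_one_le_right a.cast_nonneg one_le_K_mul) one_le_K
    _ = K * (1 + a * (b - 1)) := by ring
    _ ≤ K * b ^ a := by gcongr

lemma natCast_rpow_eq_prod_primeFactors {m : ℕ} (hm : m ≠ 0) (δ : ℝ) :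
    (m : ℝ) ^ δ = ∏ p ∈ m.primeFactors, ((p : ℝ) ^ δ) ^ m.factorization p := by
  conv_lhs =>
    rw [← Nat.prod_factorization_pow_eq_self hm, Nat.prod_factorization_eq_prod_primeFactors]
  push_cast
  rw [← Real.finsetProd_rpow _ _ fun p _ ↦ by positivity]
  exact prod_congr rfl fun p _ ↦ (Real.rpow_pow_comm p.cast_nonneg _ _).symm

lemma prod_ite_lt_le_pow {R : Type*} [CommSemiring R] [PartialOrder R] [IsOrderedRing R]
    {K : R} (hK : 1 ≤ K) (P : ℕ) (s : Finset ℕ) :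
    ∏ p ∈ s, (if p < P then K else 1) ≤ K ^ P := by
  have card_filter_le : #{p ∈ s | p < P} ≤ P := by
    simpa using card_le_card (t := range P) fun p hp ↦ mem_range.2 (mem_filter.1 hp).2
  rw [← prod_filter, prod_const]
  exact pow_le_pow_right₀ hK card_filter_le

lemma exists_forall_card_divisors_le_mul_rpow {δ : ℝ} (hδ : 0 < δ) :
    ∃ C : ℝ, 0 < C ∧ ∀ m : ℕ, m ≠ 0 → (#m.divisors : ℝ) ≤ C * (m : ℝ) ^ δ := by
  obtain ⟨P, two_le_rpow⟩ : ∃ P : ℕ, ∀ p ≥ P, (2 : ℝ) ≤ (p : ℝ) ^ δ :=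
    Filter.eventually_atTop.1 <| ((tendsto_rpow_atTop hδ).comp
      tendsto_natCast_atTop_atTop).eventually_ge_atTop 2
  obtain ⟨K, one_le_K, add_one_le⟩ :=
    exists_forall_natCast_add_one_le_mul_pow (Real.one_lt_rpow one_lt_two hδ)
  have local_bound (p : ℕ) (hp : p.Prime) (a : ℕ) :
      ((a + 1 : ℕ) : ℝ) ≤ (if p < P then K else 1) * ((p : ℝ) ^ δ) ^ a := by
    split_ifs with hpP
    · have two_le : (2 : ℝ) ≤ p := mod_cast hp.two_le
      push_cast
      exact (add_one_le a).trans (by gcongr)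
    · calc ((a + 1 : ℕ) : ℝ) ≤ 2 ^ a := mod_cast (Nat.lt_two_pow_self : a < 2 ^ a)
        _ ≤ 1 * ((p : ℝ) ^ δ) ^ a := by
          rw [one_mul]; gcongr; exact two_le_rpow p (not_lt.1 hpP)
  refine ⟨K ^ P, by positivity, fun m hm ↦ ?_⟩
  rw [Nat.card_divisors hm, Nat.cast_prod, natCast_rpow_eq_prod_primeFactors hm]
  calc ∏ p ∈ m.primeFactors, ((m.factorization p + 1 : ℕ) : ℝ)
      ≤ ∏ p ∈ m.primeFactors, (if p < P then K else 1) * ((p : ℝ) ^ δ) ^ m.factorization p :=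
        prod_le_prod (fun _ _ ↦ by positivity)
          fun p hp ↦ local_bound p (Nat.prime_of_mem_primeFactors hp) _
    _ ≤ K ^ P * ∏ p ∈ m.primeFactors, ((p : ℝ) ^ δ) ^ m.factorization p := by
        rw [prod_mul_distrib]
        gcongr
        exact prod_ite_lt_le_pow one_le_K P _

lemma card_le_two_mul_card_divisors_natAbs {μ : ℤ} (hμ : μ ≠ 0) {S : Finset ℤ}
    (hS : ∀ d ∈ S, d ∣ μ) : #S ≤ 2 * #μ.natAbs.divisors := by
  refine card_le_mul_card_image_of_maps_to (f := Int.natAbs) (fun d hd ↦ ?_) 2 fun b _ ↦ ?_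
  · exact Nat.mem_divisors.2 ⟨Int.natAbs_dvd_natAbs.2 (hS d hd), Int.natAbs_ne_zero.2 hμ⟩
  · calc #{d ∈ S | d.natAbs = b} ≤ #{(b : ℤ), -(b : ℤ)} :=
          card_le_card fun d hd ↦ by simpa using Int.natAbs_eq_iff.1 (mem_filter.1 hd).2
      _ ≤ 2 := card_le_two

end DivisorBound

section ProductOfDivisors

lemma dvd_prod_sub_sub_prod_neg {ι R : Type*} [CommRing R] (a : R) (f : ι → R) (s : Finset ι) :
    a ∣ ∏ i ∈ s, (a - f i) - ∏ i ∈ s, -f i := by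
  have a_eq_zero : Ideal.Quotient.mk (Ideal.span {a}) a = 0 := by simp
  rw [← Ideal.mem_span_singleton, ← Ideal.Quotient.eq]
  simp [a_eq_zero]

lemma prod_dvd_mul_prod_offDiag_sub {ι R : Type*} [CommRing R] {f : ι → R} {μ : R}
    {s : Finset ι} (hs : ∀ i ∈ s, f i ∣ μ) :
    ∏ i ∈ s, f i ∣ μ * ∏ p ∈ s.offDiag, (f p.1 - f p.2) := by
  classical
  induction s using Finset.induction_on with
  | empty => simp
  | insert a s ha ih =>
    have hrest : ∏ i ∈ s, f i ∣ μ * ∏ p ∈ s.offDiag, (f p.1 - f p.2) :=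
      ih fun i hi ↦ hs i (mem_insert_of_mem hi)
    -- Modulo `f a`, the new factor `∏ (f a - f i)` is `± ∏ f i`.
    have hnew : f a * ∏ i ∈ s, f i ∣
        μ * (∏ p ∈ s.offDiag, (f p.1 - f p.2)) * ∏ i ∈ s, (f a - f i) := by
      obtain ⟨u, hu⟩ := dvd_prod_sub_sub_prod_neg (f a) f s
      rw [sub_eq_iff_eq_add.1 hu, prod_neg, mul_add]
      refine dvd_add ?_ ?_
      · rw [← mul_assoc, mul_comm (f a)]
        exact (mul_dvd_mul_right hrest _).mul_right u
      · rw [mul_left_comm, mul_right_comm]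
        exact ((mul_dvd_mul_right (hs a (mem_insert_self a s)) _).mul_right _).mul_left _
    have hsub : s.offDiag ∪ {a} ×ˢ s ⊆ (insert a s).offDiag :=
      (offDiag_insert ha).symm ▸ subset_union_left
    have hdisj : Disjoint s.offDiag ({a} ×ˢ s) := by
      rw [disjoint_left]; grind
    rw [prod_insert ha]
    refine hnew.trans ?_
    rw [mul_assoc]
    refine mul_dvd_mul_left μ ?_
    simpa only [prod_union hdisj, prod_product, prod_singleton] using
      prod_dvd_prod_of_subset _ _ (fun p : ι × ι ↦ f p.1 - f p.2) hsub

lemma prod_abs_le_abs_mul_pow_card_offDiag {μ : ℤ} (hμ : μ ≠ 0) {S : Finset ℤ} {M : ℝ}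
    (hdvd : ∀ d ∈ S, d ∣ μ) (hM : ∀ a ∈ S, ∀ b ∈ S, |(a - b : ℝ)| ≤ M) :
    ∏ d ∈ S, |(d : ℝ)| ≤ |(μ : ℝ)| * M ^ #S.offDiag := by
  have hne : μ * ∏ p ∈ S.offDiag, (p.1 - p.2) ≠ 0 :=
    mul_ne_zero hμ <| prod_ne_zero_iff.2 fun p hp ↦ sub_ne_zero.2 (mem_offDiag.1 hp).2.2
  have hle : |∏ d ∈ S, d| ≤ |μ * ∏ p ∈ S.offDiag, (p.1 - p.2)| :=
    Int.le_of_dvd (abs_pos.2 hne) <| (abs_dvd_abs _ _).2 <|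
      prod_dvd_mul_prod_offDiag_sub (f := id) hdvd
  calc ∏ d ∈ S, |(d : ℝ)| ≤ |(μ : ℝ)| * ∏ p ∈ S.offDiag, |(p.1 - p.2 : ℝ)| := by
        rw [abs_mul, abs_prod, abs_prod] at hle
        exact_mod_cast hle
    _ ≤ |(μ : ℝ)| * M ^ #S.offDiag := by
        rw [← prod_const]
        gcongr with p hp
        obtain ⟨h₁, h₂, -⟩ := mem_offDiag.1 hp
        exact hM _ h₁ _ h₂

end ProductOfDivisors

section RpowComparison

lemma rpow_mul_div_le_rpow_of_rpow_le_pow {y z η ε : ℝ} {J : ℕ} (hy : 0 ≤ y) (hz : 0 ≤ z)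
    (hε : 0 ≤ ε) (hJ : J ≠ 0) (h : y ^ η ≤ z ^ J) : y ^ (η * (ε / J)) ≤ z ^ ε := by
  calc y ^ (η * (ε / J)) = (y ^ η) ^ (ε / J) := Real.rpow_mul hy _ _
    _ ≤ (z ^ J) ^ (ε / J) := by gcongr
    _ = z ^ ε := by
        rw [← Real.rpow_natCast_mul hz, mul_div_cancel₀ _ (Nat.cast_ne_zero.2 hJ)]

lemma le_pow_of_rpow_le {y z η : ℝ} {m : ℕ} (hy : 1 ≤ y) (hη : 0 < η) (hm : η⁻¹ ≤ m)
    (h : y ^ η ≤ z) : y ≤ z ^ m := by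
  have one_le_z : 1 ≤ z := (Real.one_le_rpow hy hη.le).trans h
  calc y ≤ z ^ η⁻¹ := (Real.le_rpow_inv_iff_of_pos (by linarith) (by linarith) hη).2 h
    _ ≤ z ^ (m : ℝ) := Real.rpow_le_rpow_of_exponent_le one_le_z hm
    _ = z ^ m := Real.rpow_natCast z m

end RpowComparison

section DivisorsNear

/-- The (positive and negative) divisors of `μ` in the closed interval of radius `N` around `x`.
The interval is written with integer endpoints so that this is a `Finset`, also for `μ = 0`. -/
noncomputable def divisorsNear (μ : ℤ) (x N : ℝ) : Finset ℤ :=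
  {d ∈ Icc ⌈x - N⌉ ⌊x + N⌋ | d ∣ μ}

variable {μ d : ℤ} {x N : ℝ}

lemma mem_divisorsNear : d ∈ divisorsNear μ x N ↔ d ∣ μ ∧ |x - d| ≤ N := by
  rw [divisorsNear, mem_filter, mem_Icc, Int.ceil_le, Int.le_floor, and_comm, abs_sub_le_iff,
    sub_le_comm, sub_le_iff_le_add' (a := (d : ℝ))]

lemma abs_pow_card_le_of_subset_divisorsNear (hμ : μ ≠ 0) (hN : 1 ≤ N) (hx : 2 * N ≤ |x|)
    {T : Finset ℤ} (hT : T ⊆ divisorsNear μ x N) :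
    |x| ^ #T ≤ |(μ : ℝ)| * (2 * N) ^ (#T ^ 2) := by
  have near (d) (hd : d ∈ T) : |x - d| ≤ N := (mem_divisorsNear.1 (hT hd)).2
  have half_le (d) (hd : d ∈ T) : |x| / 2 ≤ |(d : ℝ)| := by
    linarith [near d hd, abs_sub_abs_le_abs_sub x d]
  have sub_le (a) (ha : a ∈ T) (b) (hb : b ∈ T) : |(a - b : ℝ)| ≤ 2 * N := by
    have := abs_sub_le (a : ℝ) x b
    rw [abs_sub_comm (a : ℝ) x] at this
    linarith [near a ha, near b hb]
  have card_add : #T + #T.offDiag = #T ^ 2 := by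
    rw [offDiag_card, sq, Nat.add_sub_cancel' (Nat.le_mul_self _)]
  calc |x| ^ #T = 2 ^ #T * (|x| / 2) ^ #T := by rw [← mul_pow, mul_div_cancel₀ _ two_ne_zero]
    _ ≤ (2 * N) ^ #T * ∏ d ∈ T, |(d : ℝ)| := by
        rw [← prod_const (|x| / 2)]
        gcongr with d hd
        · linarith
        · exact half_le d hd
    _ ≤ (2 * N) ^ #T * (|(μ : ℝ)| * (2 * N) ^ #T.offDiag) := by
        gcongr
        exact prod_abs_le_abs_mul_pow_card_offDiag hμ
          (fun d hd ↦ (mem_divisorsNear.1 (hT hd)).1) sub_le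
    _ = |(μ : ℝ)| * (2 * N) ^ (#T ^ 2) := by rw [← card_add, pow_add]; ring

lemma card_divisorsNear_le_of_pow_lt_abs (hμ : μ ≠ 0) (hN : 1 ≤ N) {m : ℕ}
    (hμx : |(μ : ℝ)| ≤ |x| ^ m) (hx : (2 * N) ^ ((m + 1) ^ 2) < |x|) :
    #(divisorsNear μ x N) ≤ m := by
  by_contra! hcard
  obtain ⟨T, hT, card_T⟩ := exists_subset_card_eq (Nat.succ_le_of_lt hcard)
  have two_mul_le : 2 * N ≤ |x| := (le_self_pow₀ (by linarith) (by positivity)).trans hx.le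
  have x_pos : 0 < |x| := by linarith
  have key := abs_pow_card_le_of_subset_divisorsNear hμ hN two_mul_le hT
  rw [card_T] at key
  refine hx.not_ge (le_of_mul_le_mul_left ?_ (pow_pos x_pos m))
  calc |x| ^ m * |x| = |x| ^ (m + 1) := (pow_succ _ _).symm
    _ ≤ |(μ : ℝ)| * (2 * N) ^ ((m + 1) ^ 2) := key
    _ ≤ |x| ^ m * (2 * N) ^ ((m + 1) ^ 2) := by gcongr

lemma exists_forall_card_divisorsNear_le {η ε : ℝ} (hη : 0 < η) (hε : 0 < ε) :
    ∃ C : ℝ, 0 < C ∧ ∀ (μ : ℤ) (x N : ℝ), μ ≠ 0 → |(μ : ℝ)| ^ η ≤ |x| → 1 ≤ N →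
      (#(divisorsNear μ x N) : ℝ) ≤ C * N ^ ε := by
  obtain ⟨m, hm⟩ := exists_nat_ge η⁻¹
  set J := (m + 1) ^ 2
  have hJ : J ≠ 0 := by positivity
  obtain ⟨C, C_pos, divisor_bound⟩ :=
    exists_forall_card_divisors_le_mul_rpow (δ := η * (ε / J)) (by positivity)
  refine ⟨2 * C * 2 ^ ε + m, by positivity, fun μ x N hμ hx hN ↦ ?_⟩
  rcases le_or_gt |x| ((2 * N) ^ J) with x_small | x_large
  · have hcard : (#(divisorsNear μ x N) : ℝ) ≤ 2 * #μ.natAbs.divisors :=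
      mod_cast card_le_two_mul_card_divisors_natAbs hμ fun d hd ↦ (mem_divisorsNear.1 hd).1
    have hdiv := divisor_bound μ.natAbs (Int.natAbs_ne_zero.2 hμ)
    rw [Nat.cast_natAbs, Int.cast_abs] at hdiv
    calc (#(divisorsNear μ x N) : ℝ) ≤ 2 * (C * |(μ : ℝ)| ^ (η * (ε / J))) := by linarith
      _ ≤ 2 * (C * (2 * N) ^ ε) := by
          gcongr
          exact rpow_mul_div_le_rpow_of_rpow_le_pow (abs_nonneg _) (by positivity) hε.le hJ
            (hx.trans x_small)
      _ = 2 * C * 2 ^ ε * N ^ ε := by rw [Real.mul_rpow zero_le_two (by linarith)]; ring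
      _ ≤ (2 * C * 2 ^ ε + m) * N ^ ε := by
          gcongr; exact le_add_of_nonneg_right m.cast_nonneg
  · have one_le_abs : 1 ≤ |(μ : ℝ)| := mod_cast Int.one_le_abs hμ
    calc (#(divisorsNear μ x N) : ℝ) ≤ m := mod_cast
          card_divisorsNear_le_of_pow_lt_abs hμ hN (le_pow_of_rpow_le one_le_abs hη hm hx) x_large
      _ ≤ m * N ^ ε := le_mul_of_one_le_right m.cast_nonneg (Real.one_le_rpow hN hε.le)
      _ ≤ (2 * C * 2 ^ ε + m) * N ^ ε := by
          gcongr; exact le_add_of_nonneg_left (by positivity)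

end DivisorsNear

lemma sub_mem_divisorsNear {n a μ : ℤ} {N : ℝ} (hdvd : n - a ∣ μ) (ha : |(a : ℝ)| ≤ N) :
    n - a ∈ divisorsNear μ n N :=
  mem_divisorsNear.2 ⟨hdvd, by simpa using ha⟩

theorem resonance_level_set_count_general {η ε : ℝ} (hη : 0 < η) (hε : 0 < ε) :
    ∃ C > 0, ∀ (n μ : ℤ), μ ≠ 0 → (|μ| : ℝ) ^ η ≤ (|n| : ℝ) →
      ∀ (N₂ N₃ : ℝ), 1 ≤ N₂ → 1 ≤ N₃ →
        {p : ℤ × ℤ | 3 * (n - p.1) * (n - p.2) * (p.1 + p.2) = μ ∧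
          (|p.1| : ℝ) ≤ N₂ ∧ (|p.2| : ℝ) ≤ N₃}.Finite ∧
        (({p : ℤ × ℤ | 3 * (n - p.1) * (n - p.2) * (p.1 + p.2) = μ ∧
          (|p.1| : ℝ) ≤ N₂ ∧ (|p.2| : ℝ) ≤ N₃}.ncard : ℝ) ≤ C * (N₂ * N₃) ^ ε) := by
  obtain ⟨C, C_pos, card_le⟩ := exists_forall_card_divisorsNear_le hη hε
  refine ⟨C * C, by positivity, fun n μ hμ hn N₂ N₃ hN₂ hN₃ ↦ ?_⟩
  set X := {p : ℤ × ℤ | 3 * (n - p.1) * (n - p.2) * (p.1 + p.2) = μ ∧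
    (|p.1| : ℝ) ≤ N₂ ∧ (|p.2| : ℝ) ≤ N₃}
  set D := divisorsNear μ n N₂ ×ˢ divisorsNear μ n N₃
  have maps_to : Set.MapsTo (fun p : ℤ × ℤ ↦ (n - p.1, n - p.2)) X D := by
    rintro ⟨a, b⟩ ⟨h, ha, hb⟩
    exact mem_product.2 ⟨sub_mem_divisorsNear ⟨3 * (n - b) * (a + b), by rw [← h]; ring⟩ ha,
      sub_mem_divisorsNear ⟨3 * (n - a) * (a + b), by rw [← h]; ring⟩ hb⟩
  have inj_on : Set.InjOn (fun p : ℤ × ℤ ↦ (n - p.1, n - p.2)) X :=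
    (sub_right_injective.prodMap sub_right_injective).injOn
  refine ⟨.of_injOn maps_to inj_on D.finite_toSet, ?_⟩
  calc (X.ncard : ℝ) ≤ #D := by
        rw [← Set.ncard_coe_finset]
        exact mod_cast Set.ncard_le_ncard_of_injOn _ maps_to inj_on D.finite_toSet
    _ = #(divisorsNear μ n N₂) * #(divisorsNear μ n N₃) := by rw [card_product, Nat.cast_mul]
    _ ≤ C * N₂ ^ ε * (C * N₃ ^ ε) := by
        gcongr
        exacts [card_le μ n N₂ hμ hn hN₂, card_le μ n N₃ hμ hn hN₃]
    _ = C * C * (N₂ * N₃) ^ ε := by rw [Real.mul_rpow (by linarith) (by linarith)]; ring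

/-- The counting bound `|X_*^μ(n)| ≲ (N₂N₃)^ε` for level sets of the resonance function
`3(n−n₂)(n−n₃)(n₂+n₃)` in the region `X_A`, used in the proof of Lemma 5.1. -/
theorem resonance_level_set_count (ε : ℝ) (hε0 : 0 < ε) (hε1 : ε < 1) :
    ∃ C > 0, ∀ (n μ : ℤ), μ ≠ 0 → (|μ| : ℝ) ^ ε ≤ (|n| : ℝ) →
      ∀ (N₂ N₃ : ℝ), 1 ≤ N₂ → 1 ≤ N₃ →
        {p : ℤ × ℤ | 3 * (n - p.1) * (n - p.2) * (p.1 + p.2) = μ ∧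
          (|p.1| : ℝ) ≤ N₂ ∧ (|p.2| : ℝ) ≤ N₃}.Finite ∧
        (({p : ℤ × ℤ | 3 * (n - p.1) * (n - p.2) * (p.1 + p.2) = μ ∧
          (|p.1| : ℝ) ≤ N₂ ∧ (|p.2| : ℝ) ≤ N₃}.ncard : ℝ) ≤ C * (N₂ * N₃) ^ ε) := by
  exact resonance_level_set_count_general hε0 hε0
end
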